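/- Let n ≥ 2, let Ω, Ω̃ ⊆ ℝⁿ be bounded, uniformly convex open domains with smooth boundary, with the closure of Ω̃ contained in the open unit ball B₁(0). Then there exist positive constants C₁₄, C₁₅, C₁₆, depending only on Ω and Ω̃, such that for every strictly convex solution (u, c) of the second boundary value problem for the Lorentz mean curvature operator on (Ω, Ω̃): (i) ⟨ξ, D²u(x) ξ⟩ ≤ C₁₄ |ξ|² for all x in the closure of Ω and all ξ ∈ ℝⁿ; and (ii) C₁₅ ≤ tr(D²u(x)) = ∑_{i=1}^n ∂²u/∂xᵢ²(x) ≤ C₁₆ for all x in the closure of Ω. -/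

import Mathlib

noncomputable section
open MeasureTheory
open scoped RealInnerProductSpace

/-- The `i`-th standard basis vector of `ℝⁿ`. -/
def ev (n : ℕ) (i : Fin n) : EuclideanSpace ℝ (Fin n) := EuclideanSpace.single i 1

/-- Lorentz mean curvature operator `M[u] x = ∑ i, ∂ᵢ (∂ᵢ u / √(1 - |∇u|²)) x`. -/
def MOp (n : ℕ) (u : EuclideanSpace ℝ (Fin n) → ℝ) (x : EuclideanSpace ℝ (Fin n)) : ℝ :=
  ∑ i : Fin n,
    fderiv ℝ (fun y => fderiv ℝ u y (ev n i) / Real.sqrt (1 - ‖gradient u y‖ ^ 2)) x (ev n i)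

/-- Euclidean mean curvature operator `E[u] x = ∑ i, ∂ᵢ (∂ᵢ u / √(1 + |∇u|²)) x`. -/
def EOp (n : ℕ) (u : EuclideanSpace ℝ (Fin n) → ℝ) (x : EuclideanSpace ℝ (Fin n)) : ℝ :=
  ∑ i : Fin n,
    fderiv ℝ (fun y => fderiv ℝ u y (ev n i) / Real.sqrt (1 + ‖gradient u y‖ ^ 2)) x (ev n i)

/-- `Ω` is a uniformly convex domain with smooth boundary, exhibited by the defining
function `h` with uniform concavity constant `θ`:  `h` is smooth, `Ω = {h > 0}`,
`|∇h| = 1` on `∂Ω`, and `⟨ξ, D²h(p) ξ⟩ ≤ -θ |ξ|²` for all `p, ξ`. -/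
def IsUnifConvexDefFn (n : ℕ) (Ω : Set (EuclideanSpace ℝ (Fin n)))
    (h : EuclideanSpace ℝ (Fin n) → ℝ) (θ : ℝ) : Prop :=
  ContDiff ℝ (⊤ : ℕ∞) h ∧ Ω = {p | 0 < h p} ∧
  (∀ p ∈ frontier Ω, ‖gradient h p‖ = 1) ∧ 0 < θ ∧
  ∀ p ξ : EuclideanSpace ℝ (Fin n), ⟪ξ, fderiv ℝ (gradient h) p ξ⟫ ≤ -θ * ‖ξ‖ ^ 2

/-- `u` is smooth on the closure of `Ω` (i.e. on an open neighbourhood of it). -/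
def SmoothOnClosure (n : ℕ) (Ω : Set (EuclideanSpace ℝ (Fin n)))
    (u : EuclideanSpace ℝ (Fin n) → ℝ) : Prop :=
  ∃ U : Set (EuclideanSpace ℝ (Fin n)), IsOpen U ∧ closure Ω ⊆ U ∧ ContDiffOn ℝ (⊤ : ℕ∞) u U

/-- `(u, c)` is a strictly convex solution of the second boundary value problem for the
Lorentz mean curvature operator on `(Ω, Ω')`: `u` is smooth up to the boundary, spacelike
(`|∇u| < 1`), has positive definite Hessian `D²u` on the closure of `Ω`, its gradient map
is a bijection from `Ω` onto `Ω'`, and `M[u] = c` on `Ω`. -/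
def IsSol (n : ℕ) (Ω Ω' : Set (EuclideanSpace ℝ (Fin n)))
    (u : EuclideanSpace ℝ (Fin n) → ℝ) (c : ℝ) : Prop :=
  SmoothOnClosure n Ω u ∧
  (∀ x ∈ closure Ω, ‖gradient u x‖ < 1) ∧
  (∀ x ∈ closure Ω, ∀ ξ : EuclideanSpace ℝ (Fin n), ξ ≠ 0 →
      0 < ⟪ξ, fderiv ℝ (gradient u) x ξ⟫) ∧
  Set.BijOn (gradient u) Ω Ω' ∧
  (∀ x ∈ Ω, MOp n u x = c)

/-- `(u, c)` is a strictly convex solution of the second boundary value problem for the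
Euclidean mean curvature operator on `(Ω, Ω')`. -/
def IsSolE (n : ℕ) (Ω Ω' : Set (EuclideanSpace ℝ (Fin n)))
    (u : EuclideanSpace ℝ (Fin n) → ℝ) (c : ℝ) : Prop :=
  SmoothOnClosure n Ω u ∧
  (∀ x ∈ closure Ω, ∀ ξ : EuclideanSpace ℝ (Fin n), ξ ≠ 0 →
      0 < ⟪ξ, fderiv ℝ (gradient u) x ξ⟫) ∧
  Set.BijOn (gradient u) Ω Ω' ∧
  (∀ x ∈ Ω, EOp n u x = c)

/-- `ut` is the Legendre transform of `u`: it is smooth up to the boundary of `Ω'`,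
satisfies `ut (∇u x) = ⟨x, ∇u x⟩ - u x` and `∇ut (∇u x) = x` for `x ∈ Ω`. -/
def IsLegendre (n : ℕ) (Ω Ω' : Set (EuclideanSpace ℝ (Fin n)))
    (u ut : EuclideanSpace ℝ (Fin n) → ℝ) : Prop :=
  SmoothOnClosure n Ω' ut ∧
  (∀ x ∈ Ω, ut (gradient u x) = ⟪x, gradient u x⟫ - u x) ∧
  (∀ x ∈ Ω, gradient ut (gradient u x) = x)

/-- The coefficient matrix `s_ij(p) = (δ_ij + pᵢpⱼ/(1 - |p|²)) / √(1 - |p|²)` of the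
Lorentz mean curvature operator written in nondivergence form. -/
def sMat (n : ℕ) (p : EuclideanSpace ℝ (Fin n)) (i j : Fin n) : ℝ :=
  ((if i = j then (1 : ℝ) else 0) + p i * p j / (1 - ‖p‖ ^ 2)) / Real.sqrt (1 - ‖p‖ ^ 2)

/-- `Ω` has smooth boundary: it is the superlevel set of a smooth function whose
gradient does not vanish on the boundary. -/
def HasSmoothBoundary (n : ℕ) (Ω : Set (EuclideanSpace ℝ (Fin n))) : Prop :=
  ∃ g : EuclideanSpace ℝ (Fin n) → ℝ, ContDiff ℝ (⊤ : ℕ∞) g ∧ Ω = {p | 0 < g p} ∧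
    ∀ p ∈ frontier Ω, gradient g p ≠ 0

/-- `B(p) = Iₙ + p pᵀ / (v (1 + v))`, `v = √(1 - |p|²)`: the positive square root of the
inverse induced metric of a spacelike graph with gradient `p`. -/
def sqB (n : ℕ) (p : EuclideanSpace ℝ (Fin n)) : Matrix (Fin n) (Fin n) ℝ :=
  1 + (Real.sqrt (1 - ‖p‖ ^ 2) * (1 + Real.sqrt (1 - ‖p‖ ^ 2)))⁻¹ •
      Matrix.of fun i j => p i * p j

/-- `B'(p) = Iₙ - p pᵀ / (1 + v)`, `v = √(1 - |p|²)`: the square root of the induced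
metric of a spacelike graph with gradient `p`. -/
def sqBinv (n : ℕ) (p : EuclideanSpace ℝ (Fin n)) : Matrix (Fin n) (Fin n) ℝ :=
  1 - (1 + Real.sqrt (1 - ‖p‖ ^ 2))⁻¹ • Matrix.of fun i j => p i * p j

/-!
Writing `T` for the Laplacian and `p` for the gradient of `u`, and `W = √(1 - |p|²)`, one has
`M[u] = T / W + ⟨p, D²u p⟩ / W³`. Since `0 ≤ ⟨p, D²u p⟩ ≤ T |p|²` and `W² + |p|² = 1`, this gives
`T ≤ c ≤ T / W³`; as `W` is bounded below in terms of `Ω'`, everything reduces to two-sided bounds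
on the constant `c`, for which `T` only needs to be controlled at one point or on average.

* At the maximum of `u - A |x - x₀|² / 2` over a ball in `Ω` of radius `r` with `A = 3 / r`, which
  is interior because `|∇u| < 1`, one has `D²u ≤ A`, so that `c` is bounded above.
* As `∇u` maps `Ω` onto `Ω'`, the area formula and the arithmetic-geometric mean inequality for the
  eigenvalues of `D²u` give `|Ω'| ≤ ∫ det D²u ≤ (c / n)ⁿ |Ω|`, so that `c` is bounded below.
-/

section PositiveOperator

lemma prod_le_sum_div_card_pow {ι : Type*} [Fintype ι] {z : ι → ℝ} (hz : ∀ i, 0 ≤ z i) :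
    ∏ i, z i ≤ ((∑ i, z i) / Fintype.card ι) ^ Fintype.card ι := by
  rcases isEmpty_or_nonempty ι with _ | _
  · simp
  have card_pos : (0 : ℝ) < Fintype.card ι := by exact_mod_cast Fintype.card_pos
  have am_gm : (∏ i, z i) ^ (Fintype.card ι : ℝ)⁻¹ ≤ (∑ i, z i) / Fintype.card ι := by
    simpa using Real.geom_mean_le_arith_mean Finset.univ (fun _ ↦ 1) z (by simp)
      (by simpa using Fintype.card_pos) fun i _ ↦ hz i
  have sum_nonneg : 0 ≤ ∑ i, z i := Finset.sum_nonneg fun i _ ↦ hz i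
  rw [← Real.rpow_natCast]
  exact (Real.rpow_inv_le_iff_of_pos (Finset.prod_nonneg fun i _ ↦ hz i) (by positivity)
    card_pos).1 am_gm

variable {E : Type*} [NormedAddCommGroup E] [InnerProductSpace ℝ E] [FiniteDimensional ℝ E]
  {H : E →L[ℝ] E}

lemma inner_self_apply_le_trace_mul_norm_sq (hH : H.IsPositive) (v : E) :
    ⟪v, H v⟫ ≤ LinearMap.trace ℝ E H * ‖v‖ ^ 2 := by
  obtain ⟨m, w, rfl⟩ := ContinuousLinearMap.isPositive_iff_eq_sum_rankOne.1 hH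
  have quadratic_form : ⟪v, (∑ i, InnerProductSpace.rankOne ℝ (w i) (w i)) v⟫ =
      ∑ i, ⟪w i, v⟫ ^ 2 := by
    simp [inner_sum, inner_smul_right, real_inner_comm v, sq]
  have trace_eq : LinearMap.trace ℝ E ↑(∑ i, InnerProductSpace.rankOne ℝ (w i) (w i)) =
      ∑ i, ‖w i‖ ^ 2 := by
    simp [InnerProductSpace.trace_rankOne]
  rw [quadratic_form, trace_eq, Finset.sum_mul]
  gcongr with i
  rw [← mul_pow]
  exact sq_le_sq.2 ((abs_real_inner_le_norm _ _).trans (le_abs_self _))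

lemma abs_det_le_trace_div_finrank_pow (hH : H.IsPositive) :
    |H.det| ≤ (LinearMap.trace ℝ E H / Module.finrank ℝ E) ^ Module.finrank ℝ E := by
  have det_eq := hH.isSymmetric.det_eq_prod_eigenvalues rfl
  have trace_eq := hH.isSymmetric.trace_eq_sum_eigenvalues rfl
  have eigenvalues_nonneg := hH.toLinearMap.nonneg_eigenvalues rfl
  simp only [RCLike.ofReal_real_eq_id, id_eq] at det_eq trace_eq
  rw [ContinuousLinearMap.det, det_eq, trace_eq,
    abs_of_nonneg (Finset.prod_nonneg fun i _ ↦ eigenvalues_nonneg i)]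
  simpa using prod_le_sum_div_card_pow eigenvalues_nonneg

end PositiveOperator

section Hessian

variable {E : Type*} [NormedAddCommGroup E] [InnerProductSpace ℝ E]

/-- The Hessian operator of `u` at `x`, that is, the derivative of the gradient. -/
abbrev hessian [CompleteSpace E] (u : E → ℝ) (x : E) : E →L[ℝ] E := fderiv ℝ (gradient u) x

section Complete

variable [CompleteSpace E] {u : E → ℝ} {x : E}

lemma contDiffAt_gradient (hu : ContDiffAt ℝ 2 u x) : ContDiffAt ℝ 1 (gradient u) x :=
  (InnerProductSpace.toDual ℝ E).symm.contDiff.contDiffAt.comp x (hu.fderiv_right (by norm_num))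

lemma hasFDerivAt_gradient (hu : ContDiffAt ℝ 2 u x) : HasFDerivAt (gradient u) (hessian u x) x :=
  ((contDiffAt_gradient hu).differentiableAt one_ne_zero).hasFDerivAt

lemma inner_hessian_apply (hu : ContDiffAt ℝ 2 u x) (v w : E) :
    ⟪v, hessian u x w⟫ = fderiv ℝ (fderiv ℝ u) x w v := by
  have deriv_inner := ((innerSL ℝ v).hasFDerivAt.comp x (hasFDerivAt_gradient hu)).fderiv
  have deriv_apply := fderiv_clm_apply
    ((hu.fderiv_right (m := 1) (by norm_num)).differentiableAt one_ne_zero)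
    (differentiableAt_const v)
  have inner_eq_apply : innerSL ℝ v ∘ gradient u = fun y ↦ fderiv ℝ u y v := by
    ext y
    simp [inner_gradient_right]
  rw [inner_eq_apply, deriv_apply] at deriv_inner
  simpa using (DFunLike.congr_fun deriv_inner w).symm

lemma isSymmetric_hessian (hu : ContDiffAt ℝ 2 u x) : (hessian u x).IsSymmetric := fun v w ↦ by
  rw [ContinuousLinearMap.coe_coe, real_inner_comm, inner_hessian_apply hu,
    inner_hessian_apply hu]
  exact hu.isSymmSndFDerivAt (by simp) v w

lemma isPositive_hessian (hu : ContDiffAt ℝ 2 u x) (hpos : ∀ v, 0 ≤ ⟪v, hessian u x v⟫) :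
    (hessian u x).IsPositive :=
  (ContinuousLinearMap.isPositive_iff _).2
    ⟨isSymmetric_hessian hu, fun v ↦ real_inner_comm v _ ▸ hpos v⟩

lemma deriv_deriv_nonpos_of_isLocalMax {f : ℝ → ℝ} {a : ℝ} (hmax : IsLocalMax f a)
    (hf : ContinuousAt f a) : deriv (deriv f) a ≤ 0 := by
  by_contra! deriv_pos
  have hmin : IsLocalMin f a := isLocalMin_of_deriv_deriv_pos deriv_pos hmax.deriv_eq_zero hf
  have eq_const : f =ᶠ[nhds a] fun _ ↦ f a := (hmax.and hmin).mono fun _ h ↦ h.1.antisymm h.2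
  simpa using eq_const.deriv.deriv_eq.symm.trans_gt deriv_pos

lemma inner_hessian_self_nonpos_of_isLocalMax (hu : ContDiffAt ℝ 2 u x) (hmax : IsLocalMax u x)
    (v : E) : ⟪v, hessian u x v⟫ ≤ 0 := by
  have line_deriv (t : ℝ) : HasDerivAt (fun t : ℝ ↦ x + t • v) v t := by
    simpa using ((hasDerivAt_id t).smul_const v).const_add x
  have line_tendsto : Filter.Tendsto (fun t : ℝ ↦ x + t • v) (nhds 0) (nhds x) := by
    simpa using (line_deriv 0).continuousAt.tendsto
  have first_deriv : deriv (fun t : ℝ ↦ u (x + t • v)) =ᶠ[nhds 0]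
      fun t ↦ ⟪v, gradient u (x + t • v)⟫ := by
    filter_upwards [line_tendsto.eventually (hu.eventually (by simp))] with t hut
    have := (hut.differentiableAt two_ne_zero).hasFDerivAt.comp_hasDerivAt t (line_deriv t)
    simpa [inner_gradient_right, Function.comp_def] using this.deriv
  have second_deriv : deriv (deriv fun t : ℝ ↦ u (x + t • v)) 0 = ⟪v, hessian u x v⟫ := by
    rw [first_deriv.deriv_eq]
    have gradient_deriv := (hasFDerivAt_gradient hu).comp_hasDerivAt_of_eq (0 : ℝ) (line_deriv 0)
      (by simp)
    simpa using ((hasDerivAt_const 0 v).inner ℝ gradient_deriv).deriv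
  rw [← second_deriv]
  refine deriv_deriv_nonpos_of_isLocalMax ?_ ?_
  · simpa [IsLocalMax, IsMaxFilter] using line_tendsto.eventually hmax
  · exact ContinuousAt.comp_of_eq hu.continuousAt (line_deriv 0).continuousAt (by simp)

lemma hessian_sub_const_mul_norm_sq (hu : ContDiffAt ℝ 2 u x) (A : ℝ) (x₀ : E) :
    hessian (fun y ↦ u y - A / 2 * ‖y - x₀‖ ^ 2) x =
      hessian u x - A • ContinuousLinearMap.id ℝ E := by
  have gradient_eq : gradient (fun y ↦ u y - A / 2 * ‖y - x₀‖ ^ 2) =ᶠ[nhds x]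
      fun y ↦ gradient u y - A • (y - x₀) := by
    filter_upwards [hu.eventually (by simp)] with y huy
    have fderiv_norm_sq := ((hasFDerivAt_id y).sub_const x₀).norm_sq.const_mul (A / 2)
    have fderiv_sub : HasFDerivAt (fun y ↦ u y - A / 2 * ‖y - x₀‖ ^ 2) _ y :=
      (huy.differentiableAt two_ne_zero).hasFDerivAt.sub fderiv_norm_sq
    refine ext_inner_right ℝ fun v ↦ ?_
    rw [inner_gradient_left, fderiv_sub.fderiv]
    simp only [id_eq, map_sub, ContinuousLinearMap.comp_id, sub_apply, smul_apply,
      coe_innerSL_apply, nsmul_eq_mul, Nat.cast_ofNat, smul_eq_mul, inner_sub_left,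
      inner_gradient_left, inner_smul_left, Real.ringHom_apply, sub_right_inj]
    ring
  rw [hessian, gradient_eq.fderiv_eq]
  exact ((hasFDerivAt_gradient hu).sub (((hasFDerivAt_id x).sub_const x₀).const_smul A)).fderiv

end Complete

variable [FiniteDimensional ℝ E] {u : E → ℝ} {x₀ : E} {r L A c : ℝ}

lemma exists_hessian_le_of_norm_gradient_le (hr : 0 < r)
    (hu : ∀ y ∈ Metric.closedBall x₀ r, ContDiffAt ℝ 2 u y)
    (hL : ∀ y ∈ Metric.closedBall x₀ r, ‖gradient u y‖ ≤ L) (hA : 2 * L < A * r) :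
    ∃ z ∈ Metric.ball x₀ r, ∀ v, ⟪v, hessian u z v⟫ ≤ A * ‖v‖ ^ 2 := by
  set w : E → ℝ := fun y ↦ u y - A / 2 * ‖y - x₀‖ ^ 2 with hw
  have w_smooth : ∀ y ∈ Metric.closedBall x₀ r, ContDiffAt ℝ 2 w y := fun y hy ↦
    (hu y hy).sub (contDiffAt_const.mul ((contDiffAt_id.sub contDiffAt_const).norm_sq ℝ))
  have center_mem := Metric.mem_closedBall_self (x := x₀) hr.le
  obtain ⟨z, hz, hzmax⟩ := (isCompact_closedBall x₀ r).exists_isMaxOn ⟨x₀, center_mem⟩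
    fun y hy ↦ (w_smooth y hy).continuousAt.continuousWithinAt
  have lipschitz : ‖u z - u x₀‖ ≤ L * ‖z - x₀‖ :=
    (convex_closedBall x₀ r).norm_image_sub_le_of_norm_fderiv_le (𝕜 := ℝ)
      (fun y hy ↦ (hu y hy).differentiableAt two_ne_zero)
      (fun y hy ↦ by simpa [gradient] using hL y hy) center_mem hz
  have center_le : u x₀ ≤ u z - A / 2 * ‖z - x₀‖ ^ 2 := by simpa [hw] using hzmax center_mem
  have z_interior : z ∈ Metric.ball x₀ r := by
    by_contra hz'
    have z_boundary : ‖z - x₀‖ = r := by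
      rw [← dist_eq_norm]
      exact le_antisymm hz (not_lt.1 hz')
    rw [z_boundary] at lipschitz center_le
    nlinarith [(le_abs_self _).trans lipschitz]
  refine ⟨z, z_interior, fun v ↦ ?_⟩
  have hessian_nonpos := inner_hessian_self_nonpos_of_isLocalMax (w_smooth z hz)
    (hzmax.isLocalMax (Metric.closedBall_mem_nhds_of_mem z_interior)) v
  rw [hessian_sub_const_mul_norm_sq (hu z hz)] at hessian_nonpos
  simpa [inner_sub_right, inner_smul_right] using hessian_nonpos

lemma addHaar_image_gradient_le [MeasurableSpace E] [BorelSpace E] (μ : Measure E)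
    [μ.IsAddHaarMeasure] {s : Set E} (hs : MeasurableSet s) (hu : ∀ x ∈ s, ContDiffAt ℝ 2 u x)
    (hpos : ∀ x ∈ s, (hessian u x).IsPositive)
    (htrace : ∀ x ∈ s, LinearMap.trace ℝ E (hessian u x) ≤ c) :
    μ (gradient u '' s) ≤
      ENNReal.ofReal ((c / Module.finrank ℝ E) ^ Module.finrank ℝ E) * μ s := by
  calc μ (gradient u '' s)
      ≤ ∫⁻ x in s, ENNReal.ofReal |(hessian u x).det| ∂μ :=
        addHaar_image_le_lintegral_abs_det_fderiv μ hs fun x hx ↦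
          (hasFDerivAt_gradient (hu x hx)).hasFDerivWithinAt
    _ ≤ ∫⁻ _ in s, ENNReal.ofReal ((c / Module.finrank ℝ E) ^ Module.finrank ℝ E) ∂μ := by
        refine setLIntegral_mono' hs fun x hx ↦ ENNReal.ofReal_le_ofReal ?_
        have trace_nonneg := (hpos x hx).toLinearMap.trace_nonneg
        refine (abs_det_le_trace_div_finrank_pow (hpos x hx)).trans ?_
        gcongr
        exact htrace x hx
    _ = _ := setLIntegral_const _ _

lemma continuousAt_trace_hessian {x : E} (hu : ContDiffAt ℝ 2 u x) :
    ContinuousAt (fun y ↦ LinearMap.trace ℝ E (hessian u y)) x := by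
  have hessian_continuousAt : ContinuousAt (hessian u) x :=
    ((contDiffAt_gradient hu).fderiv_right (m := 0) (by simp)).continuousAt
  exact ((LinearMap.trace ℝ E ∘ₗ
    ContinuousLinearMap.coeLM ℝ).continuous_of_finiteDimensional.continuousAt).comp
      hessian_continuousAt

end Hessian

section LorentzOperator

lemma hasFDerivAt_inv_sqrt_one_sub_norm_sq_smul {F E : Type*} [NormedAddCommGroup F]
    [NormedSpace ℝ F] [NormedAddCommGroup E] [InnerProductSpace ℝ E] {G : F → E} {H : F →L[ℝ] E}
    {x : F} (hG : HasFDerivAt G H x) (hx : ‖G x‖ < 1) :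
    HasFDerivAt (fun y ↦ (√(1 - ‖G y‖ ^ 2))⁻¹ • G y)
      ((√(1 - ‖G x‖ ^ 2))⁻¹ • H +
        ((√(1 - ‖G x‖ ^ 2) ^ 3)⁻¹ • innerSL ℝ (G x) ∘L H).smulRight (G x)) x := by
  have one_sub_pos : 0 < 1 - ‖G x‖ ^ 2 := by nlinarith [norm_nonneg (G x)]
  have sqrt_pos := Real.sqrt_pos.2 one_sub_pos
  have inv_sqrt := (hasDerivAt_inv sqrt_pos.ne').comp_hasFDerivAt x
    ((hG.norm_sq.const_sub 1).sqrt one_sub_pos.ne')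
  refine (inv_sqrt.smul hG).congr_fderiv ?_
  congr 2
  ext v
  simp only [one_div, mul_inv_rev, smul_neg, neg_smul, neg_neg, smul_apply,
    ContinuousLinearMap.comp_apply, coe_innerSL_apply, nsmul_eq_mul, Nat.cast_ofNat, smul_eq_mul]
  field_simp

variable {n : ℕ} {u : EuclideanSpace ℝ (Fin n) → ℝ} {x : EuclideanSpace ℝ (Fin n)} {ρ : ℝ}

lemma sum_inner_ev_apply (H : EuclideanSpace ℝ (Fin n) →L[ℝ] EuclideanSpace ℝ (Fin n)) :
    ∑ i, ⟪ev n i, H (ev n i)⟫ = LinearMap.trace ℝ _ H.toLinearMap := by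
  simp [LinearMap.trace_eq_sum_inner _ (EuclideanSpace.basisFun (Fin n) ℝ), ev]

lemma MOp_eq_trace_hessian (hu : ContDiffAt ℝ 2 u x) (hx : ‖gradient u x‖ < 1) :
    MOp n u x = LinearMap.trace ℝ _ (hessian u x).toLinearMap / √(1 - ‖gradient u x‖ ^ 2) +
      ⟪gradient u x, hessian u x (gradient u x)⟫ / √(1 - ‖gradient u x‖ ^ 2) ^ 3 := by
  have field_deriv := hasFDerivAt_inv_sqrt_one_sub_norm_sq_smul (hasFDerivAt_gradient hu) hx
  have field_coord (i : Fin n) (y : EuclideanSpace ℝ (Fin n)) :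
      fderiv ℝ u y (ev n i) / √(1 - ‖gradient u y‖ ^ 2) =
        innerSL ℝ (ev n i) ((√(1 - ‖gradient u y‖ ^ 2))⁻¹ • gradient u y) := by
    simp [inner_gradient_right, div_eq_inv_mul]
  have trace_smulRight (f : EuclideanSpace ℝ (Fin n) →L[ℝ] ℝ) (p : EuclideanSpace ℝ (Fin n)) :
      LinearMap.trace ℝ _ (f.smulRight p).toLinearMap = f p :=
    LinearMap.trace_smulRight f.toLinearMap p
  have term_eq (i : Fin n) := ((innerSL ℝ (ev n i)).hasFDerivAt.comp x field_deriv).fderiv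
  simp only [Function.comp_def, ← field_coord] at term_eq
  simp only [MOp, term_eq, ContinuousLinearMap.comp_apply, innerSL_apply_apply]
  rw [sum_inner_ev_apply, ContinuousLinearMap.toLinearMap_add, map_add,
    ContinuousLinearMap.toLinearMap_smul, map_smul, trace_smulRight]
  simp [div_eq_inv_mul]

lemma trace_hessian_le_MOp (hu : ContDiffAt ℝ 2 u x) (hx : ‖gradient u x‖ < 1)
    (hpos : (hessian u x).IsPositive) :
    LinearMap.trace ℝ _ (hessian u x).toLinearMap ≤ MOp n u x := by
  have sqrt_pos : 0 < √(1 - ‖gradient u x‖ ^ 2) :=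
    Real.sqrt_pos.2 (by nlinarith [norm_nonneg (gradient u x)])
  have sqrt_le_one : √(1 - ‖gradient u x‖ ^ 2) ≤ 1 := Real.sqrt_le_one.2 (by simp)
  have trace_nonneg := hpos.toLinearMap.trace_nonneg
  have quadratic_nonneg := hpos.inner_nonneg_right (gradient u x)
  rw [MOp_eq_trace_hessian hu hx]
  exact (le_div_self trace_nonneg sqrt_pos sqrt_le_one).trans
    (le_add_of_nonneg_right (by positivity))

lemma MOp_le_trace_hessian_div (hu : ContDiffAt ℝ 2 u x) (hx : ‖gradient u x‖ ≤ ρ) (hρ : ρ < 1)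
    (hpos : (hessian u x).IsPositive) :
    MOp n u x ≤ LinearMap.trace ℝ _ (hessian u x).toLinearMap / √(1 - ρ ^ 2) ^ 3 := by
  have hρ₀ : 0 ≤ ρ := (norm_nonneg _).trans hx
  set W := √(1 - ‖gradient u x‖ ^ 2)
  have W_sq : W ^ 2 = 1 - ‖gradient u x‖ ^ 2 :=
    Real.sq_sqrt (by nlinarith [norm_nonneg (gradient u x)])
  have sqrt_pos : 0 < √(1 - ρ ^ 2) := Real.sqrt_pos.2 (by nlinarith)
  have sqrt_le : √(1 - ρ ^ 2) ≤ W := Real.sqrt_le_sqrt (by gcongr)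
  have W_pos : 0 < W := sqrt_pos.trans_le sqrt_le
  have trace_nonneg := hpos.toLinearMap.trace_nonneg
  set T := LinearMap.trace ℝ _ (hessian u x).toLinearMap
  calc MOp n u x = T / W + ⟪gradient u x, hessian u x (gradient u x)⟫ / W ^ 3 :=
        MOp_eq_trace_hessian hu (hx.trans_lt hρ)
    _ ≤ T / W + T * ‖gradient u x‖ ^ 2 / W ^ 3 := by
        gcongr
        exact inner_self_apply_le_trace_mul_norm_sq hpos _
    _ = T * (W ^ 2 + ‖gradient u x‖ ^ 2) / W ^ 3 := by field_simp
    _ = T / W ^ 3 := by rw [W_sq]; ring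
    _ ≤ T / √(1 - ρ ^ 2) ^ 3 := by gcongr

end LorentzOperator

section Solution

variable {n : ℕ} {Ω Ω' : Set (EuclideanSpace ℝ (Fin n))} {u : EuclideanSpace ℝ (Fin n) → ℝ} {c : ℝ}
  {x : EuclideanSpace ℝ (Fin n)}

namespace IsSol

lemma contDiffAt (hu : IsSol n Ω Ω' u c) (hx : x ∈ closure Ω) : ContDiffAt ℝ 2 u x := by
  obtain ⟨U, U_open, closure_subset, u_smooth⟩ := hu.1
  exact (u_smooth.contDiffAt (U_open.mem_nhds (closure_subset hx))).of_le
    (WithTop.coe_le_coe.2 (le_top (a := (2 : ℕ∞))))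

lemma isPositive_hessian (hu : IsSol n Ω Ω' u c) (hx : x ∈ closure Ω) :
    (hessian u x).IsPositive := by
  refine _root_.isPositive_hessian (hu.contDiffAt hx) fun v ↦ ?_
  rcases eq_or_ne v 0 with rfl | hv
  · simp
  · exact (hu.2.2.1 x hx v hv).le

lemma mapsTo_gradient (hu : IsSol n Ω Ω' u c) : Set.MapsTo (gradient u) Ω Ω' := hu.2.2.2.1.mapsTo

lemma image_gradient (hu : IsSol n Ω Ω' u c) : gradient u '' Ω = Ω' := hu.2.2.2.1.image_eq

lemma MOp_eq (hu : IsSol n Ω Ω' u c) (hx : x ∈ Ω) : MOp n u x = c := hu.2.2.2.2 x hx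

lemma continuousOn_trace_hessian (hu : IsSol n Ω Ω' u c) :
    ContinuousOn (fun x ↦ LinearMap.trace ℝ _ (hessian u x).toLinearMap) (closure Ω) :=
  fun _ hx ↦ (continuousAt_trace_hessian (hu.contDiffAt hx)).continuousWithinAt

lemma trace_hessian_le (hu : IsSol n Ω Ω' u c) (hx : x ∈ closure Ω) :
    LinearMap.trace ℝ _ (hessian u x).toLinearMap ≤ c := by
  refine le_on_closure (fun y hy ↦ ?_) hu.continuousOn_trace_hessian continuousOn_const hx
  have y_mem := subset_closure hy
  rw [← hu.MOp_eq hy]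
  exact trace_hessian_le_MOp (hu.contDiffAt y_mem) (hu.2.1 y y_mem) (hu.isPositive_hessian y_mem)

lemma le_trace_hessian_div {ρ : ℝ} (hu : IsSol n Ω Ω' u c) (hρ : ρ < 1)
    (hΩ' : ∀ p ∈ Ω', ‖p‖ ≤ ρ) (hx : x ∈ closure Ω) :
    c ≤ LinearMap.trace ℝ _ (hessian u x).toLinearMap / √(1 - ρ ^ 2) ^ 3 := by
  refine le_on_closure (fun y hy ↦ ?_) continuousOn_const
    (hu.continuousOn_trace_hessian.div_const _) hx
  have y_mem := subset_closure hy
  rw [← hu.MOp_eq hy]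
  exact MOp_le_trace_hessian_div (hu.contDiffAt y_mem) (hΩ' _ (hu.mapsTo_gradient hy)) hρ
    (hu.isPositive_hessian y_mem)

lemma le_of_closedBall_subset {ρ r : ℝ} {x₀ : EuclideanSpace ℝ (Fin n)}
    (hu : IsSol n Ω Ω' u c) (hρ : ρ < 1) (hΩ' : ∀ p ∈ Ω', ‖p‖ ≤ ρ) (hr : 0 < r)
    (hball : Metric.closedBall x₀ r ⊆ Ω) : c ≤ n * (3 / r) / √(1 - ρ ^ 2) ^ 3 := by
  obtain ⟨z, hz, hessian_le⟩ := exists_hessian_le_of_norm_gradient_le (u := u) (L := 1)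
    (A := 3 / r) hr (fun y hy ↦ hu.contDiffAt (subset_closure (hball hy)))
    (fun y hy ↦ (hu.2.1 y (subset_closure (hball hy))).le)
    (by rw [div_mul_cancel₀ _ hr.ne']; norm_num)
  have trace_le : LinearMap.trace ℝ _ (hessian u z).toLinearMap ≤ n * (3 / r) := by
    rw [← sum_inner_ev_apply]
    calc ∑ i, ⟪ev n i, hessian u z (ev n i)⟫ ≤ ∑ _ : Fin n, 3 / r :=
          Finset.sum_le_sum fun i _ ↦ by simpa [ev] using hessian_le (ev n i)
      _ = n * (3 / r) := by simp
  refine (hu.le_trace_hessian_div hρ hΩ'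
    (subset_closure (hball (Metric.ball_subset_closedBall hz)))).trans ?_
  gcongr

lemma volume_le (hu : IsSol n Ω Ω' u c) (hΩ : MeasurableSet Ω) :
    volume Ω' ≤ ENNReal.ofReal ((c / n) ^ n) * volume Ω := by
  rw [← hu.image_gradient]
  simpa using addHaar_image_gradient_le volume hΩ
    (fun x hx ↦ hu.contDiffAt (subset_closure hx))
    (fun x hx ↦ hu.isPositive_hessian (subset_closure hx))
    fun x hx ↦ hu.trace_hessian_le (subset_closure hx)

lemma nonneg (hu : IsSol n Ω Ω' u c) (hΩ : Ω.Nonempty) : 0 ≤ c := by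
  obtain ⟨x, hx⟩ := hΩ
  have x_mem := subset_closure hx
  exact (hu.isPositive_hessian x_mem).toLinearMap.trace_nonneg.trans (hu.trace_hessian_le x_mem)

end IsSol

lemma exists_pos_forall_le_of_isSol (hn : n ≠ 0) (hΩ : MeasurableSet Ω) (hΩ_fin : volume Ω ≠ ⊤)
    (hΩ' : volume Ω' ≠ 0) : ∃ δ > 0, ∀ u c, IsSol n Ω Ω' u c → δ ≤ c := by
  have bound_tendsto : Filter.Tendsto (fun δ : ℝ ↦ ENNReal.ofReal ((δ / n) ^ n) * volume Ω)
      (nhdsWithin 0 (Set.Ioi 0)) (nhds 0) := by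
    have ofReal_continuous : Continuous fun δ : ℝ ↦ ENNReal.ofReal ((δ / n) ^ n) :=
      ENNReal.continuous_ofReal.comp (by fun_prop)
    simpa [hn] using (ENNReal.Tendsto.mul_const (ofReal_continuous.tendsto 0)
      (Or.inr hΩ_fin)).mono_left nhdsWithin_le_nhds
  obtain ⟨δ, bound_lt, hδ⟩ := ((bound_tendsto.eventually_lt_const (pos_iff_ne_zero.2 hΩ')).and
    self_mem_nhdsWithin).exists
  refine ⟨δ, hδ, fun u c hu ↦ ?_⟩
  have hΩ_nonempty : Ω.Nonempty := by
    rw [← Set.image_nonempty, hu.image_gradient]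
    exact nonempty_of_measure_ne_zero hΩ'
  have c_nonneg := hu.nonneg hΩ_nonempty
  by_contra! hcδ
  refine (hu.volume_le hΩ).not_gt (bound_lt.trans_le' ?_)
  gcongr

end Solution

theorem statement11_general {n : ℕ} (hn : n ≠ 0) {Ω Ω' : Set (EuclideanSpace ℝ (Fin n))}
    (hΩ : IsOpen Ω) (hΩ_fin : volume Ω ≠ ⊤) (hΩ' : IsOpen Ω')
    (hsub : closure Ω' ⊆ Metric.ball (0 : EuclideanSpace ℝ (Fin n)) 1) :
    ∃ C₁₄ C₁₅ C₁₆ : ℝ, 0 < C₁₄ ∧ 0 < C₁₅ ∧ 0 < C₁₆ ∧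
      ∀ (u : EuclideanSpace ℝ (Fin n) → ℝ) (c : ℝ), IsSol n Ω Ω' u c →
        (∀ x ∈ closure Ω, ∀ ξ : EuclideanSpace ℝ (Fin n),
            ⟪ξ, fderiv ℝ (gradient u) x ξ⟫ ≤ C₁₄ * ‖ξ‖ ^ 2) ∧
        (∀ x ∈ closure Ω,
            C₁₅ ≤ ∑ i : Fin n, ⟪ev n i, fderiv ℝ (gradient u) x (ev n i)⟫ ∧
            ∑ i : Fin n, ⟪ev n i, fderiv ℝ (gradient u) x (ev n i)⟫ ≤ C₁₆) := by
  rcases Ω.eq_empty_or_nonempty with rfl | ⟨x₀, hx₀⟩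
  · exact ⟨1, 1, 1, by simp⟩
  rcases Ω'.eq_empty_or_nonempty with rfl | hΩ'_nonempty
  · exact ⟨1, 1, 1, by simp, by simp, by simp, fun u c hu ↦ (hu.mapsTo_gradient hx₀).elim⟩
  obtain ⟨ρ, ⟨hρ₀, hρ₁⟩, hρ⟩ := exists_pos_lt_subset_ball one_pos isClosed_closure hsub
  have norm_le : ∀ p ∈ Ω', ‖p‖ ≤ ρ := fun p hp ↦ (mem_ball_zero_iff.1 (hρ (subset_closure hp))).le
  obtain ⟨r, hr, hball⟩ := Metric.nhds_basis_closedBall.mem_iff.1 (hΩ.mem_nhds hx₀)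
  obtain ⟨δ, hδ, hδ_le⟩ := exists_pos_forall_le_of_isSol hn hΩ.measurableSet hΩ_fin
    (hΩ'.measure_pos volume hΩ'_nonempty).ne'
  have sqrt_pos : 0 < √(1 - ρ ^ 2) := Real.sqrt_pos.2 (by nlinarith)
  set B : ℝ := n * (3 / r) / √(1 - ρ ^ 2) ^ 3
  have B_pos : 0 < B := by have := Nat.pos_of_ne_zero hn; positivity
  refine ⟨B, δ * √(1 - ρ ^ 2) ^ 3, B, B_pos, by positivity, B_pos, fun u c hu ↦ ?_⟩
  have trace_le (x) (hx : x ∈ closure Ω) :=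
    (hu.trace_hessian_le hx).trans (hu.le_of_closedBall_subset hρ₁ norm_le hr hball)
  refine ⟨fun x hx ξ ↦ ?_, fun x hx ↦ ?_⟩
  · exact (inner_self_apply_le_trace_mul_norm_sq (hu.isPositive_hessian hx) ξ).trans
      (by gcongr; exact trace_le x hx)
  · rw [sum_inner_ev_apply]
    refine ⟨?_, trace_le x hx⟩
    rw [← le_div_iff₀ (by positivity)]
    exact (hδ_le u c hu).trans (hu.le_trace_hessian_div hρ₁ norm_le hx)

/-- Lemma 4.1.  Upper bound on the Hessian and two-sided bound on the
Laplacian of a strictly convex solution, with constants depending only on the domains. -/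
theorem statement11 (n : ℕ) (hn : 2 ≤ n) (Ω Ω' : Set (EuclideanSpace ℝ (Fin n)))
    (g h : EuclideanSpace ℝ (Fin n) → ℝ) (θ₁ θ₂ : ℝ)
    (hΩb : Bornology.IsBounded Ω) (hΩ'b : Bornology.IsBounded Ω')
    (hΩ : IsUnifConvexDefFn n Ω g θ₁) (hΩ' : IsUnifConvexDefFn n Ω' h θ₂)
    (hsub : closure Ω' ⊆ Metric.ball (0 : EuclideanSpace ℝ (Fin n)) 1) :
    ∃ C₁₄ C₁₅ C₁₆ : ℝ, 0 < C₁₄ ∧ 0 < C₁₅ ∧ 0 < C₁₆ ∧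
      ∀ (u : EuclideanSpace ℝ (Fin n) → ℝ) (c : ℝ), IsSol n Ω Ω' u c →
        (∀ x ∈ closure Ω, ∀ ξ : EuclideanSpace ℝ (Fin n),
            ⟪ξ, fderiv ℝ (gradient u) x ξ⟫ ≤ C₁₄ * ‖ξ‖ ^ 2) ∧
        (∀ x ∈ closure Ω,
            C₁₅ ≤ ∑ i : Fin n, ⟪ev n i, fderiv ℝ (gradient u) x (ev n i)⟫ ∧
            ∑ i : Fin n, ⟪ev n i, fderiv ℝ (gradient u) x (ev n i)⟫ ≤ C₁₆) :=
  statement11_general (by lia) (hΩ.2.1 ▸ isOpen_lt continuous_const hΩ.1.continuous)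
    hΩb.measure_lt_top.ne (hΩ'.2.1 ▸ isOpen_lt continuous_const hΩ'.1.continuous) hsub
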